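/- Under the stated hypotheses, for all k, l ∈ ℝ, all m ∈ ℂ with Im m ≤ 0, and all t > 0, the function R(k,l,m,t) := k·ŵ(k,l,m,t) − m·û(k,l,m,t) satisfies the ordinary differential equation ∂²ₜR + μ(k²+l²+m²)R = F_R(k,l,m,t), where F_R := −( (λ+2μ)k·g̃₃ + iμk²·ũ + iμkl·ṽ ) + m·( μ·g̃₁ − 2iμk·w̃ ) + i μ m²·ũ. -/

import Mathlib

open MeasureTheory Set

noncomputable section

/-- Partial derivative of a function of `(x, y, z, t)` in the `i`-th slot. -/
def pd : Fin 4 → (ℝ → ℝ → ℝ → ℝ → ℝ) → (ℝ → ℝ → ℝ → ℝ → ℝ)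
  | ⟨0, _⟩, f => fun x y z t => deriv (fun x' => f x' y z t) x
  | ⟨1, _⟩, f => fun x y z t => deriv (fun y' => f x y' z t) y
  | ⟨2, _⟩, f => fun x y z t => deriv (fun z' => f x y z' t) z
  | ⟨3, _⟩, f => fun x y z t => deriv (fun t' => f x y z t') t

/-- Smoothness of a function of `(x, y, z, t)` jointly in its four arguments. -/
def Smooth4 (f : ℝ → ℝ → ℝ → ℝ → ℝ) : Prop :=
  ContDiff ℝ (⊤ : ℕ∞) fun p : ℝ × ℝ × ℝ × ℝ => f p.1 p.2.1 p.2.2.1 p.2.2.2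

/-- `f` decays faster than any power of `1 + |x| + |y| + z` on the half space `z ≥ 0`,
uniformly for `t` in compact time intervals. -/
def Decays (f : ℝ → ℝ → ℝ → ℝ → ℝ) : Prop :=
  ∀ T : ℝ, 0 < T → ∀ n : ℕ, ∃ C : ℝ, ∀ x y z t : ℝ,
    0 ≤ z → 0 ≤ t → t ≤ T → |f x y z t| ≤ C / (1 + |x| + |y| + z) ^ n

/-- `f` and all its partial derivatives of order at most two decay. -/
def DecaysAll (f : ℝ → ℝ → ℝ → ℝ → ℝ) : Prop :=
  Decays f ∧ (∀ i : Fin 4, Decays (pd i f)) ∧ ∀ i j : Fin 4, Decays (pd i (pd j f))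

/-- The three-dimensional Lamé–Navier equations on the half space `z > 0`, `t > 0`
(with unit density). -/
def LameNavier (lam mu : ℝ) (u v w : ℝ → ℝ → ℝ → ℝ → ℝ) : Prop :=
  ∀ x y z t : ℝ, 0 < z → 0 < t →
    ((lam + 2 * mu) * pd 0 (pd 0 u) x y z t
        + (lam + mu) * (pd 0 (pd 1 v) x y z t + pd 0 (pd 2 w) x y z t)
        + mu * (pd 1 (pd 1 u) x y z t + pd 2 (pd 2 u) x y z t)
      = pd 3 (pd 3 u) x y z t) ∧
    ((lam + 2 * mu) * pd 1 (pd 1 v) x y z t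
        + (lam + mu) * (pd 1 (pd 2 w) x y z t + pd 1 (pd 0 u) x y z t)
        + mu * (pd 2 (pd 2 v) x y z t + pd 0 (pd 0 v) x y z t)
      = pd 3 (pd 3 v) x y z t) ∧
    ((lam + 2 * mu) * pd 2 (pd 2 w) x y z t
        + (lam + mu) * (pd 2 (pd 0 u) x y z t + pd 2 (pd 1 v) x y z t)
        + mu * (pd 0 (pd 0 w) x y z t + pd 1 (pd 1 w) x y z t)
      = pd 3 (pd 3 w) x y z t)

/-- Lamb's stress boundary conditions on the surface `z = 0`. -/
def StressBC (lam mu : ℝ) (u v w : ℝ → ℝ → ℝ → ℝ → ℝ) (g₁ g₂ g₃ : ℝ → ℝ → ℝ → ℝ) : Prop :=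
  ∀ x y t : ℝ, 0 < t →
    pd 2 u x y 0 t + pd 0 w x y 0 t = g₁ x y t ∧
    pd 2 v x y 0 t + pd 1 w x y 0 t = g₂ x y t ∧
    pd 2 w x y 0 t + lam / (lam + 2 * mu) * (pd 0 u x y 0 t + pd 1 v x y 0 t) = g₃ x y t

/-- The half-space Fourier transform `∫∫∫ e^{−ikx−ily−imz} f dz dy dx`, defined for
`k, l ∈ ℝ` and `m` in the closed lower half plane. -/
def FT3 (f : ℝ → ℝ → ℝ → ℝ → ℝ) (k l : ℝ) (m : ℂ) (t : ℝ) : ℂ :=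
  ∫ x : ℝ, ∫ y : ℝ, ∫ z in Ici (0 : ℝ),
    Complex.exp (-Complex.I * ((k : ℂ) * x + (l : ℂ) * y) - Complex.I * m * z) * (f x y z t : ℂ)

/-- The boundary Fourier transform `∫∫ e^{−ikx−ily} f(x, y, t) dy dx`. -/
def FT2 (f : ℝ → ℝ → ℝ → ℝ) (k l : ℝ) (t : ℝ) : ℂ :=
  ∫ x : ℝ, ∫ y : ℝ,
    Complex.exp (-Complex.I * ((k : ℂ) * x + (l : ℂ) * y)) * (f x y t : ℂ)

/-- The forcing `F_P` of the ODE for `P = kû + lv̂ + mŵ`, built from the transforms of the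
boundary data `g₁, g₂, g₃` and the boundary values of `u, v, w`. -/
def FP (lam mu : ℝ) (u v w : ℝ → ℝ → ℝ → ℝ → ℝ) (g₁ g₂ g₃ : ℝ → ℝ → ℝ → ℝ)
    (k l : ℝ) (m : ℂ) (t : ℝ) : ℂ :=
  -((mu : ℂ) * (k : ℂ) * FT2 g₁ k l t + (mu : ℂ) * (l : ℂ) * FT2 g₂ k l t
      + Complex.I * (lam : ℂ) * ((k : ℂ) ^ 2 + (l : ℂ) ^ 2) *
        FT2 (fun x y τ => w x y 0 τ) k l t)
    - m * (2 * Complex.I * (mu : ℂ) * (k : ℂ) * FT2 (fun x y τ => u x y 0 τ) k l t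
        + 2 * Complex.I * (mu : ℂ) * (l : ℂ) * FT2 (fun x y τ => v x y 0 τ) k l t
        + ((lam : ℂ) + 2 * (mu : ℂ)) * FT2 g₃ k l t)
    - Complex.I * m ^ 2 * ((lam : ℂ) + 2 * (mu : ℂ)) * FT2 (fun x y τ => w x y 0 τ) k l t

/-- The forcing `F_Q` of the ODE for `Q = mv̂ − lŵ`. -/
def FQ (lam mu : ℝ) (u v w : ℝ → ℝ → ℝ → ℝ → ℝ) (g₁ g₂ g₃ : ℝ → ℝ → ℝ → ℝ)
    (k l : ℝ) (m : ℂ) (t : ℝ) : ℂ :=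
  (((lam : ℂ) + 2 * (mu : ℂ)) * (l : ℂ) * FT2 g₃ k l t
      + Complex.I * (mu : ℂ) * (k : ℂ) * (l : ℂ) * FT2 (fun x y τ => u x y 0 τ) k l t
      + Complex.I * (mu : ℂ) * (l : ℂ) ^ 2 * FT2 (fun x y τ => v x y 0 τ) k l t)
    + m * (-((mu : ℂ)) * FT2 g₂ k l t
        + 2 * Complex.I * (mu : ℂ) * (l : ℂ) * FT2 (fun x y τ => w x y 0 τ) k l t)
    - Complex.I * (mu : ℂ) * m ^ 2 * FT2 (fun x y τ => v x y 0 τ) k l t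

/-- The forcing `F_R` of the ODE for `R = kŵ − mû`. -/
def FR (lam mu : ℝ) (u v w : ℝ → ℝ → ℝ → ℝ → ℝ) (g₁ g₂ g₃ : ℝ → ℝ → ℝ → ℝ)
    (k l : ℝ) (m : ℂ) (t : ℝ) : ℂ :=
  -(((lam : ℂ) + 2 * (mu : ℂ)) * (k : ℂ) * FT2 g₃ k l t
      + Complex.I * (mu : ℂ) * (k : ℂ) ^ 2 * FT2 (fun x y τ => u x y 0 τ) k l t
      + Complex.I * (mu : ℂ) * (k : ℂ) * (l : ℂ) * FT2 (fun x y τ => v x y 0 τ) k l t)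
    + m * ((mu : ℂ) * FT2 g₁ k l t
        - 2 * Complex.I * (mu : ℂ) * (k : ℂ) * FT2 (fun x y τ => w x y 0 τ) k l t)
    + Complex.I * (mu : ℂ) * m ^ 2 * FT2 (fun x y τ => u x y 0 τ) k l t

open Filter Topology

lemma sm_hd0 {f : ℝ → ℝ → ℝ → ℝ → ℝ} (h : Smooth4 f) (x y z t : ℝ) :
    HasDerivAt (fun x' => f x' y z t) (pd 0 f x y z t) x := by
  have : ContDiff ℝ (⊤ : ℕ∞) (fun x' => f x' y z t) :=
    ContDiff.comp (g := fun p : ℝ × ℝ × ℝ × ℝ => f p.1 p.2.1 p.2.2.1 p.2.2.2)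
      (f := fun x' => (x', y, z, t)) h (by fun_prop)
  exact ((this.differentiable (by simp)) x).hasDerivAt

lemma sm_hd1 {f : ℝ → ℝ → ℝ → ℝ → ℝ} (h : Smooth4 f) (x y z t : ℝ) :
    HasDerivAt (fun y' => f x y' z t) (pd 1 f x y z t) y := by
  have : ContDiff ℝ (⊤ : ℕ∞) (fun y' => f x y' z t) :=
    ContDiff.comp (g := fun p : ℝ × ℝ × ℝ × ℝ => f p.1 p.2.1 p.2.2.1 p.2.2.2)
      (f := fun y' => (x, y', z, t)) h (by fun_prop)
  exact ((this.differentiable (by simp)) y).hasDerivAt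

lemma sm_hd2 {f : ℝ → ℝ → ℝ → ℝ → ℝ} (h : Smooth4 f) (x y z t : ℝ) :
    HasDerivAt (fun z' => f x y z' t) (pd 2 f x y z t) z := by
  have : ContDiff ℝ (⊤ : ℕ∞) (fun z' => f x y z' t) :=
    ContDiff.comp (g := fun p : ℝ × ℝ × ℝ × ℝ => f p.1 p.2.1 p.2.2.1 p.2.2.2)
      (f := fun z' => (x, y, z', t)) h (by fun_prop)
  exact ((this.differentiable (by simp)) z).hasDerivAt

lemma sm_hd3 {f : ℝ → ℝ → ℝ → ℝ → ℝ} (h : Smooth4 f) (x y z t : ℝ) :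
    HasDerivAt (fun t' => f x y z t') (pd 3 f x y z t) t := by
  have : ContDiff ℝ (⊤ : ℕ∞) (fun t' => f x y z t') :=
    ContDiff.comp (g := fun p : ℝ × ℝ × ℝ × ℝ => f p.1 p.2.1 p.2.2.1 p.2.2.2)
      (f := fun t' => (x, y, z, t')) h (by fun_prop)
  exact ((this.differentiable (by simp)) t).hasDerivAt

lemma sm_of_fderiv {f g : ℝ → ℝ → ℝ → ℝ → ℝ} (h : Smooth4 f) (e : ℝ × ℝ × ℝ × ℝ)
    (hg : ∀ x y z t, g x y z t =
      fderiv ℝ (fun p : ℝ × ℝ × ℝ × ℝ => f p.1 p.2.1 p.2.2.1 p.2.2.2) (x, y, z, t) e) :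
    Smooth4 g := by
  unfold Smooth4
  have h1 : ContDiff ℝ (⊤ : ℕ∞)
      (fderiv ℝ (fun p : ℝ × ℝ × ℝ × ℝ => f p.1 p.2.1 p.2.2.1 p.2.2.2)) :=
    ContDiff.fderiv_right (n := (⊤ : ℕ∞)) h (by simp)
  have h2 := h1.clm_apply (contDiff_const (c := e))
  have e : (fun p : ℝ × ℝ × ℝ × ℝ => g p.1 p.2.1 p.2.2.1 p.2.2.2) = fun p =>
      fderiv ℝ (fun p : ℝ × ℝ × ℝ × ℝ => f p.1 p.2.1 p.2.2.1 p.2.2.2) p e := by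
    ext ⟨x, y, z, t⟩
    exact hg x y z t
  rw [e]
  exact h2

lemma sm_pd {f : ℝ → ℝ → ℝ → ℝ → ℝ} (h : Smooth4 f) (i : Fin 4) : Smooth4 (pd i f) := by
  have hd : ∀ p, HasFDerivAt (fun p : ℝ × ℝ × ℝ × ℝ => f p.1 p.2.1 p.2.2.1 p.2.2.2)
      (fderiv ℝ (fun p : ℝ × ℝ × ℝ × ℝ => f p.1 p.2.1 p.2.2.1 p.2.2.2) p) p := fun p =>
    ((ContDiff.differentiable h (by simp)) p).hasFDerivAt
  fin_cases i
  · refine sm_of_fderiv h (1, 0, 0, 0) fun x y z t => (sm_hd0 h x y z t).unique ?_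
    exact (hd (x, y, z, t)).comp_hasDerivAt (f := fun x' => (x', y, z, t)) x
      ((hasDerivAt_id x).prodMk ((hasDerivAt_const _ _).prodMk
        ((hasDerivAt_const _ _).prodMk (hasDerivAt_const _ _))))
  · refine sm_of_fderiv h (0, 1, 0, 0) fun x y z t => (sm_hd1 h x y z t).unique ?_
    exact (hd (x, y, z, t)).comp_hasDerivAt (f := fun y' => (x, y', z, t)) y
      ((hasDerivAt_const _ _).prodMk ((hasDerivAt_id _).prodMk
        ((hasDerivAt_const _ _).prodMk (hasDerivAt_const _ _))))
  · refine sm_of_fderiv h (0, 0, 1, 0) fun x y z t => (sm_hd2 h x y z t).unique ?_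
    exact (hd (x, y, z, t)).comp_hasDerivAt (f := fun z' => (x, y, z', t)) z
      ((hasDerivAt_const _ _).prodMk ((hasDerivAt_const _ _).prodMk
        ((hasDerivAt_id _).prodMk (hasDerivAt_const _ _))))
  · refine sm_of_fderiv h (0, 0, 0, 1) fun x y z t => (sm_hd3 h x y z t).unique ?_
    exact (hd (x, y, z, t)).comp_hasDerivAt (f := fun t' => (x, y, z, t')) t
      ((hasDerivAt_const _ _).prodMk ((hasDerivAt_const _ _).prodMk
        ((hasDerivAt_const _ _).prodMk (hasDerivAt_id _))))

/-- smooth and decaying -/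
def SD (f : ℝ → ℝ → ℝ → ℝ → ℝ) : Prop := Smooth4 f ∧ Decays f

lemma SD.add {f g : ℝ → ℝ → ℝ → ℝ → ℝ} (hf : SD f) (hg : SD g) :
    SD (fun x y z t => f x y z t + g x y z t) := by
  refine ⟨ContDiff.add hf.1 hg.1, fun T hT n => ?_⟩
  obtain ⟨C, hC⟩ := hf.2 T hT n
  obtain ⟨C', hC'⟩ := hg.2 T hT n
  refine ⟨C + C', fun x y z t hz h0 h1 => ?_⟩
  rw [add_div]
  exact (abs_add_le _ _).trans (add_le_add (hC x y z t hz h0 h1) (hC' x y z t hz h0 h1))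

lemma SD.smul {f : ℝ → ℝ → ℝ → ℝ → ℝ} (c : ℝ) (hf : SD f) :
    SD (fun x y z t => c * f x y z t) := by
  refine ⟨ContDiff.mul contDiff_const hf.1, fun T hT n => ?_⟩
  obtain ⟨C, hC⟩ := hf.2 T hT n
  refine ⟨|c| * C, fun x y z t hz h0 h1 => ?_⟩
  rw [abs_mul, mul_div_assoc]
  exact mul_le_mul_of_nonneg_left (hC x y z t hz h0 h1) (abs_nonneg _)

/-- one-dimensional weight -/
def wt (x : ℝ) : ℝ := ((1 + |x|) ^ 2)⁻¹

lemma wt_pos (x : ℝ) : 0 < wt x := by unfold wt; positivity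

lemma wt_cont : Continuous wt := by
  unfold wt
  exact Continuous.inv₀ (by fun_prop) (fun x => by positivity)

lemma wt_int : Integrable wt := by
  refine integrable_inv_one_add_sq.const_mul 1 |>.mono' wt_cont.aestronglyMeasurable
    (Eventually.of_forall fun x => ?_)
  rw [Real.norm_of_nonneg (wt_pos x).le, one_mul]
  unfold wt
  apply inv_anti₀ (by positivity)
  nlinarith [abs_nonneg x, sq_abs x]

lemma Decays.bound {f : ℝ → ℝ → ℝ → ℝ → ℝ} (hf : Decays f) (T : ℝ) (hT : 0 < T) :
    ∃ C : ℝ, 0 ≤ C ∧ ∀ x y z t : ℝ, 0 ≤ z → 0 ≤ t → t ≤ T →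
      |f x y z t| ≤ C * (wt x * (wt y * wt z)) := by
  obtain ⟨C, hC⟩ := hf T hT 6
  refine ⟨|C|, abs_nonneg _, fun x y z t hz h0 h1 => (hC x y z t hz h0 h1).trans ?_⟩
  rw [div_eq_mul_inv]
  have hx := abs_nonneg x
  have hy := abs_nonneg y
  apply mul_le_mul (le_abs_self C) _ (by positivity) (abs_nonneg _)
  unfold wt
  rw [← mul_inv, ← mul_inv, abs_of_nonneg hz]
  apply inv_anti₀ (by positivity)
  have e1 : (1 + |x|) ^ 2 ≤ (1 + |x| + |y| + z) ^ 2 :=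
    pow_le_pow_left₀ (by positivity) (by linarith) 2
  have e2 : (1 + |y|) ^ 2 ≤ (1 + |x| + |y| + z) ^ 2 :=
    pow_le_pow_left₀ (by positivity) (by linarith) 2
  have e3 : (1 + z) ^ 2 ≤ (1 + |x| + |y| + z) ^ 2 :=
    pow_le_pow_left₀ (by positivity) (by linarith) 2
  calc (1 + |x|) ^ 2 * ((1 + |y|) ^ 2 * (1 + z) ^ 2)
      ≤ (1 + |x| + |y| + z) ^ 2 * ((1 + |x| + |y| + z) ^ 2 * (1 + |x| + |y| + z) ^ 2) := by
        gcongr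
    _ = _ := by ring

/-- the kernel -/
def EE (k l : ℝ) (m : ℂ) (x y z : ℝ) : ℂ :=
  Complex.exp (-Complex.I * ((k : ℂ) * x + (l : ℂ) * y) - Complex.I * m * z)

lemma EE_norm (k l : ℝ) {m : ℂ} (hm : m.im ≤ 0) (x y : ℝ) {z : ℝ} (hz : 0 ≤ z) :
    ‖EE k l m x y z‖ ≤ 1 := by
  unfold EE
  rw [Complex.norm_exp, Real.exp_le_one_iff]
  simp
  nlinarith

lemma EE_cont (k l : ℝ) (m : ℂ) : Continuous fun p : ℝ × ℝ × ℝ => EE k l m p.1 p.2.1 p.2.2 := by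
  unfold EE; fun_prop

lemma EE_hd0 (k l : ℝ) (m : ℂ) (x y z : ℝ) :
    HasDerivAt (fun x' => EE k l m x' y z) (-Complex.I * k * EE k l m x y z) x := by
  unfold EE
  have h0 : HasDerivAt (fun x' : ℝ => (x' : ℂ)) 1 x := Complex.ofRealCLM.hasDerivAt
  have := ((((h0.const_mul (k : ℂ)).add_const ((l : ℂ) * y)).const_mul
    (-Complex.I)).sub_const (Complex.I * m * z)).cexp
  convert this using 1; ring

lemma EE_hd1 (k l : ℝ) (m : ℂ) (x y z : ℝ) :
    HasDerivAt (fun y' => EE k l m x y' z) (-Complex.I * l * EE k l m x y z) y := by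
  unfold EE
  have h0 : HasDerivAt (fun x' : ℝ => (x' : ℂ)) 1 y := Complex.ofRealCLM.hasDerivAt
  have := ((((h0.const_mul (l : ℂ)).const_add ((k : ℂ) * x)).const_mul
    (-Complex.I)).sub_const (Complex.I * m * z)).cexp
  convert this using 1; ring

lemma EE_hd2 (k l : ℝ) (m : ℂ) (x y z : ℝ) :
    HasDerivAt (fun z' => EE k l m x y z') (-Complex.I * m * EE k l m x y z) z := by
  unfold EE
  have h0 : HasDerivAt (fun x' : ℝ => (x' : ℂ)) 1 z := Complex.ofRealCLM.hasDerivAt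
  have := ((h0.const_mul (Complex.I * m)).const_sub
    (-Complex.I * ((k : ℂ) * x + (l : ℂ) * y))).cexp
  convert this using 1; ring

/-- admissible measures in the `z` variable -/
structure Adm (ρ : Measure ℝ) : Prop where
  sf : SFinite ρ
  nn : ∀ᵐ z ∂ρ, 0 ≤ z
  int : Integrable wt ρ

lemma adm_half : Adm (volume.restrict (Ici (0 : ℝ))) :=
  ⟨inferInstance, ae_restrict_mem measurableSet_Ici, wt_int.integrableOn⟩

lemma adm_dirac : Adm (Measure.dirac (0 : ℝ)) :=
  ⟨inferInstance, by simp [ae_dirac_eq], integrable_dirac (by simp)⟩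

/-- integrand -/
def HH (k l : ℝ) (m : ℂ) (f : ℝ → ℝ → ℝ → ℝ → ℝ) (t x y z : ℝ) : ℂ :=
  EE k l m x y z * (f x y z t : ℂ)

/-- transform -/
def GG (ρ : Measure ℝ) (k l : ℝ) (m : ℂ) (f : ℝ → ℝ → ℝ → ℝ → ℝ) (t : ℝ) : ℂ :=
  ∫ p : ℝ × ℝ × ℝ, HH k l m f t p.1 p.2.1 p.2.2 ∂(volume.prod (volume.prod ρ))

lemma HH_cont (k l : ℝ) (m : ℂ) {f : ℝ → ℝ → ℝ → ℝ → ℝ} (hf : SD f) (t : ℝ) :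
    Continuous fun p : ℝ × ℝ × ℝ => HH k l m f t p.1 p.2.1 p.2.2 := by
  refine (EE_cont k l m).mul (Complex.continuous_ofReal.comp ?_)
  exact (ContDiff.continuous hf.1).comp
    (f := fun p : ℝ × ℝ × ℝ => (p.1, p.2.1, p.2.2, t)) (by fun_prop)

lemma HH_bound (k l : ℝ) {m : ℂ} (hm : m.im ≤ 0) {f : ℝ → ℝ → ℝ → ℝ → ℝ} (hf : SD f)
    (T : ℝ) (hT : 0 < T) : ∃ C : ℝ, 0 ≤ C ∧ ∀ x y z t : ℝ, 0 ≤ z → 0 ≤ t → t ≤ T →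
      ‖HH k l m f t x y z‖ ≤ C * (wt x * (wt y * wt z)) := by
  obtain ⟨C, h0, hC⟩ := hf.2.bound T hT
  refine ⟨C, h0, fun x y z t hz ht hT => ?_⟩
  unfold HH
  rw [norm_mul, Complex.norm_real, Real.norm_eq_abs]
  calc _ ≤ 1 * |f x y z t| := by gcongr; exact EE_norm k l hm x y hz
    _ ≤ _ := by rw [one_mul]; exact hC x y z t hz ht hT

lemma adm_ae2 {ρ : Measure ℝ} (hρ : Adm ρ) :
    ∀ᵐ q : ℝ × ℝ ∂(volume.prod ρ), 0 ≤ q.2 := by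
  have := hρ.sf
  exact Measure.quasiMeasurePreserving_snd.ae hρ.nn

lemma adm_ae3 {ρ : Measure ℝ} (hρ : Adm ρ) :
    ∀ᵐ p : ℝ × ℝ × ℝ ∂(volume.prod (volume.prod ρ)), 0 ≤ p.2.2 := by
  have := hρ.sf
  exact Measure.quasiMeasurePreserving_snd.ae (adm_ae2 hρ)

lemma wt3_int {ρ : Measure ℝ} (hρ : Adm ρ) : Integrable
    (fun p : ℝ × ℝ × ℝ => wt p.1 * (wt p.2.1 * wt p.2.2)) (volume.prod (volume.prod ρ)) := by
  have := hρ.sf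
  exact wt_int.mul_prod (wt_int.mul_prod hρ.int)

lemma HH_int3 {ρ : Measure ℝ} (hρ : Adm ρ) (k l : ℝ) {m : ℂ} (hm : m.im ≤ 0)
    {f : ℝ → ℝ → ℝ → ℝ → ℝ} (hf : SD f) {t : ℝ} (ht : 0 ≤ t) :
    Integrable (fun p : ℝ × ℝ × ℝ => HH k l m f t p.1 p.2.1 p.2.2)
      (volume.prod (volume.prod ρ)) := by
  obtain ⟨C, h0, hC⟩ := HH_bound k l hm hf (t + 1) (by linarith)
  refine ((wt3_int hρ).const_mul C).mono' (HH_cont k l m hf t).aestronglyMeasurable ?_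
  filter_upwards [adm_ae3 hρ] with p hp
  exact hC _ _ _ _ hp ht (by linarith)

lemma HH_int2 {ρ : Measure ℝ} (hρ : Adm ρ) (k l : ℝ) {m : ℂ} (hm : m.im ≤ 0)
    {f : ℝ → ℝ → ℝ → ℝ → ℝ} (hf : SD f) {t : ℝ} (ht : 0 ≤ t) (x : ℝ) :
    Integrable (fun p : ℝ × ℝ => HH k l m f t x p.1 p.2) (volume.prod ρ) := by
  have := hρ.sf
  obtain ⟨C, h0, hC⟩ := HH_bound k l hm hf (t + 1) (by linarith)
  refine (((wt_int.mul_prod hρ.int).const_mul (wt x)).const_mul C).mono'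
    ((HH_cont k l m hf t).comp
      (f := fun p : ℝ × ℝ => (x, p.1, p.2)) (by fun_prop)).aestronglyMeasurable ?_
  filter_upwards [adm_ae2 hρ] with p hp
  exact hC _ _ _ _ hp ht (by linarith)

lemma HH_int0 (k l : ℝ) {m : ℂ} (hm : m.im ≤ 0)
    {f : ℝ → ℝ → ℝ → ℝ → ℝ} (hf : SD f) {t : ℝ} (ht : 0 ≤ t) (y : ℝ) {z : ℝ} (hz : 0 ≤ z) :
    Integrable (fun x : ℝ => HH k l m f t x y z) := by
  obtain ⟨C, h0, hC⟩ := HH_bound k l hm hf (t + 1) (by linarith)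
  refine ((wt_int.mul_const (wt y * wt z)).const_mul C).mono'
    ((HH_cont k l m hf t).comp
      (f := fun x : ℝ => (x, y, z)) (by fun_prop)).aestronglyMeasurable ?_
  exact Eventually.of_forall fun x => hC _ _ _ _ hz ht (by linarith)

lemma HH_int1 (k l : ℝ) {m : ℂ} (hm : m.im ≤ 0)
    {f : ℝ → ℝ → ℝ → ℝ → ℝ} (hf : SD f) {t : ℝ} (ht : 0 ≤ t) (x : ℝ) {z : ℝ} (hz : 0 ≤ z) :
    Integrable (fun y : ℝ => HH k l m f t x y z) := by
  obtain ⟨C, h0, hC⟩ := HH_bound k l hm hf (t + 1) (by linarith)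
  refine (((wt_int.mul_const (wt z)).const_mul (wt x)).const_mul C).mono'
    ((HH_cont k l m hf t).comp
      (f := fun y : ℝ => (x, y, z)) (by fun_prop)).aestronglyMeasurable ?_
  exact Eventually.of_forall fun y => hC _ _ _ _ hz ht (by linarith)

lemma HH_intz (k l : ℝ) {m : ℂ} (hm : m.im ≤ 0)
    {f : ℝ → ℝ → ℝ → ℝ → ℝ} (hf : SD f) {t : ℝ} (ht : 0 ≤ t) (x y : ℝ) :
    IntegrableOn (fun z : ℝ => HH k l m f t x y z) (Ici 0) := by
  obtain ⟨C, h0, hC⟩ := HH_bound k l hm hf (t + 1) (by linarith)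
  refine (((wt_int.integrableOn.const_mul (wt y)).const_mul (wt x)).const_mul C).mono'
    ((HH_cont k l m hf t).comp
      (f := fun z : ℝ => (x, y, z)) (by fun_prop)).aestronglyMeasurable ?_
  filter_upwards [ae_restrict_mem measurableSet_Ici] with z hz
  exact hC _ _ _ _ hz ht (by linarith)

lemma GG_iter {ρ : Measure ℝ} (hρ : Adm ρ) (k l : ℝ) {m : ℂ} (hm : m.im ≤ 0)
    {f : ℝ → ℝ → ℝ → ℝ → ℝ} (hf : SD f) {t : ℝ} (ht : 0 ≤ t) :
    GG ρ k l m f t = ∫ x, ∫ y, ∫ z, HH k l m f t x y z ∂ρ := by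
  have := hρ.sf
  unfold GG
  rw [integral_prod _ (HH_int3 hρ k l hm hf ht)]
  congr 1; ext x
  rw [integral_prod _ (HH_int2 hρ k l hm hf ht x)]

lemma FT3_eq (k l : ℝ) {m : ℂ} (hm : m.im ≤ 0)
    {f : ℝ → ℝ → ℝ → ℝ → ℝ} (hf : SD f) {t : ℝ} (ht : 0 ≤ t) :
    FT3 f k l m t = GG (volume.restrict (Ici 0)) k l m f t := by
  rw [GG_iter adm_half k l hm hf ht]; rfl

lemma FT2_eq (k l : ℝ) {m : ℂ} (hm : m.im ≤ 0)
    {f : ℝ → ℝ → ℝ → ℝ → ℝ} (hf : SD f) {t : ℝ} (ht : 0 ≤ t) :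
    FT2 (fun x y τ => f x y 0 τ) k l t = GG (Measure.dirac 0) k l m f t := by
  rw [GG_iter adm_dirac k l hm hf ht]
  simp [FT2, HH, EE]

lemma GG_add {ρ : Measure ℝ} (hρ : Adm ρ) (k l : ℝ) {m : ℂ} (hm : m.im ≤ 0)
    {f g : ℝ → ℝ → ℝ → ℝ → ℝ} (hf : SD f) (hg : SD g) {t : ℝ} (ht : 0 ≤ t) :
    GG ρ k l m (fun x y z t => f x y z t + g x y z t) t = GG ρ k l m f t + GG ρ k l m g t := by
  unfold GG
  rw [← integral_add (HH_int3 hρ k l hm hf ht) (HH_int3 hρ k l hm hg ht)]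
  congr 1; ext p; simp [HH]; ring

lemma GG_smul {ρ : Measure ℝ} (k l : ℝ) {m : ℂ} (c : ℝ)
    {f : ℝ → ℝ → ℝ → ℝ → ℝ} {t : ℝ} :
    GG ρ k l m (fun x y z t => c * f x y z t) t = c * GG ρ k l m f t := by
  unfold GG
  rw [← integral_const_mul]
  congr 1; ext p; simp [HH]; ring

lemma HH_hd (k l : ℝ) (m : ℂ) {f : ℝ → ℝ → ℝ → ℝ → ℝ} (hf : Smooth4 f) (t x y z : ℝ) :
    HasDerivAt (fun x => HH k l m f t x y z)
      (HH k l m (pd 0 f) t x y z - Complex.I * k * HH k l m f t x y z) x ∧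
    HasDerivAt (fun y => HH k l m f t x y z)
      (HH k l m (pd 1 f) t x y z - Complex.I * l * HH k l m f t x y z) y ∧
    HasDerivAt (fun z => HH k l m f t x y z)
      (HH k l m (pd 2 f) t x y z - Complex.I * m * HH k l m f t x y z) z ∧
    HasDerivAt (fun t => HH k l m f t x y z) (HH k l m (pd 3 f) t x y z) t := by
  unfold HH
  refine ⟨?_, ?_, ?_, ?_⟩
  · refine ((EE_hd0 k l m x y z).mul (sm_hd0 hf x y z t).ofReal_comp).congr_deriv ?_
    ring
  · refine ((EE_hd1 k l m x y z).mul (sm_hd1 hf x y z t).ofReal_comp).congr_deriv ?_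
    ring
  · refine ((EE_hd2 k l m x y z).mul (sm_hd2 hf x y z t).ofReal_comp).congr_deriv ?_
    ring
  · exact (sm_hd3 hf x y z t).ofReal_comp.const_mul _

lemma GG_pd0 {ρ : Measure ℝ} (hρ : Adm ρ) (k l : ℝ) {m : ℂ} (hm : m.im ≤ 0)
    {f : ℝ → ℝ → ℝ → ℝ → ℝ} (hf : SD f) (hf' : SD (pd 0 f)) {t : ℝ} (ht : 0 ≤ t) :
    GG ρ k l m (pd 0 f) t = Complex.I * k * GG ρ k l m f t := by
  have := hρ.sf
  unfold GG
  rw [integral_prod_symm _ (HH_int3 hρ k l hm hf' ht),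
    integral_prod_symm _ (HH_int3 hρ k l hm hf ht), ← integral_const_mul]
  apply integral_congr_ae
  filter_upwards [adm_ae2 hρ] with q hq
  have i1 := HH_int0 k l hm hf ht q.1 hq
  have i2 := HH_int0 k l hm hf' ht q.1 hq
  have := integral_eq_zero_of_hasDerivAt_of_integrable
    (fun x => (HH_hd k l m hf.1 t x q.1 q.2).1) (i2.sub (i1.const_mul _)) i1
  rw [integral_sub i2 (i1.const_mul _), integral_const_mul] at this
  exact sub_eq_zero.mp this

lemma GG_pd1 {ρ : Measure ℝ} (hρ : Adm ρ) (k l : ℝ) {m : ℂ} (hm : m.im ≤ 0)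
    {f : ℝ → ℝ → ℝ → ℝ → ℝ} (hf : SD f) (hf' : SD (pd 1 f)) {t : ℝ} (ht : 0 ≤ t) :
    GG ρ k l m (pd 1 f) t = Complex.I * l * GG ρ k l m f t := by
  have := hρ.sf
  unfold GG
  rw [integral_prod _ (HH_int3 hρ k l hm hf' ht),
    integral_prod _ (HH_int3 hρ k l hm hf ht), ← integral_const_mul]
  congr 1; ext x
  rw [integral_prod_symm _ (HH_int2 hρ k l hm hf' ht x),
    integral_prod_symm _ (HH_int2 hρ k l hm hf ht x), ← integral_const_mul]
  apply integral_congr_ae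
  filter_upwards [hρ.nn] with z hz
  have i1 := HH_int1 k l hm hf ht x hz
  have i2 := HH_int1 k l hm hf' ht x hz
  have := integral_eq_zero_of_hasDerivAt_of_integrable
    (fun y => (HH_hd k l m hf.1 t x y z).2.1) (i2.sub (i1.const_mul _)) i1
  rw [integral_sub i2 (i1.const_mul _), integral_const_mul] at this
  exact sub_eq_zero.mp this

lemma wt_tendsto : Tendsto wt atTop (𝓝 0) := by
  unfold wt
  apply Tendsto.inv_tendsto_atTop
  apply (tendsto_pow_atTop (by norm_num)).comp
  exact tendsto_atTop_add_const_left _ _ tendsto_abs_atTop_atTop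

lemma GG_pd2 (k l : ℝ) {m : ℂ} (hm : m.im ≤ 0)
    {f : ℝ → ℝ → ℝ → ℝ → ℝ} (hf : SD f) (hf' : SD (pd 2 f)) {t : ℝ} (ht : 0 ≤ t) :
    GG (volume.restrict (Ici 0)) k l m (pd 2 f) t =
      Complex.I * m * GG (volume.restrict (Ici 0)) k l m f t - GG (Measure.dirac 0) k l m f t := by
  rw [eq_sub_iff_add_eq, add_comm, ← eq_sub_iff_add_eq]
  have e : Complex.I * m * GG (volume.restrict (Ici 0)) k l m f t =
    ∫ p : ℝ × ℝ × ℝ, Complex.I * m * HH k l m f t p.1 p.2.1 p.2.2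
      ∂(volume.prod (volume.prod (volume.restrict (Ici 0)))) := by
    rw [integral_const_mul]; rfl
  have i1 := (HH_int3 adm_half k l hm hf ht).const_mul (Complex.I * m)
  have i2 := HH_int3 adm_half k l hm hf' ht
  rw [e, GG_iter adm_dirac k l hm hf ht]
  unfold GG
  rw [← integral_sub i1 i2]
  refine Eq.trans ?_ (integral_prod _ (i1.sub i2)).symm
  congr 1; ext x
  have j1 := (HH_int2 adm_half k l hm hf ht x).const_mul (Complex.I * m)
  have j2 := HH_int2 adm_half k l hm hf' ht x
  refine Eq.trans ?_ (integral_prod _ (j1.sub j2)).symm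
  congr 1; ext y
  rw [integral_dirac]
  have q1 := (HH_intz k l hm hf ht x y).const_mul (Complex.I * m)
  have q2 := HH_intz k l hm hf' ht x y
  have q3 := q2.sub q1
  have lim : Tendsto (fun z => HH k l m f t x y z) atTop (𝓝 0) := by
    obtain ⟨C, h0, hC⟩ := HH_bound k l hm hf (t + 1) (by linarith)
    have : Tendsto (fun z => C * (wt x * (wt y * wt z))) atTop (𝓝 0) := by
      simpa using ((wt_tendsto.const_mul (wt y)).const_mul (wt x)).const_mul C
    refine squeeze_zero_norm' ?_ this
    filter_upwards [eventually_ge_atTop 0] with z hz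
    exact hC x y z t hz ht (by linarith)
  have := integral_Ioi_of_hasDerivAt_of_tendsto' (a := 0)
    (fun z _ => (HH_hd k l m hf.1 t x y z).2.2.1)
    (IntegrableOn.mono_set q3 Ioi_subset_Ici_self) lim
  rw [← integral_Ici_eq_integral_Ioi, zero_sub] at this
  rw [← neg_eq_iff_eq_neg.mpr this, ← integral_neg]
  congr 1; ext z; simp only [Pi.sub_apply]; ring

lemma GG_pd3 {ρ : Measure ℝ} (hρ : Adm ρ) (k l : ℝ) {m : ℂ} (hm : m.im ≤ 0)
    {f : ℝ → ℝ → ℝ → ℝ → ℝ} (hf : SD f) (hf' : SD (pd 3 f)) {t : ℝ} (ht : 0 < t) :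
    HasDerivAt (GG ρ k l m f) (GG ρ k l m (pd 3 f) t) t := by
  obtain ⟨C, h0, hC⟩ := HH_bound k l hm hf' (t + 1) (by linarith)
  refine (hasDerivAt_integral_of_dominated_loc_of_deriv_le
    (F := fun t (p : ℝ × ℝ × ℝ) => HH k l m f t p.1 p.2.1 p.2.2)
    (F' := fun t (p : ℝ × ℝ × ℝ) => HH k l m (pd 3 f) t p.1 p.2.1 p.2.2)
    (s := Ioo 0 (t + 1)) (bound := fun p => C * (wt p.1 * (wt p.2.1 * wt p.2.2)))
    (Ioo_mem_nhds ht (by linarith)) ?_ (HH_int3 hρ k l hm hf ht.le) ?_ ?_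
    ((wt3_int hρ).const_mul C) ?_).2
  · exact Eventually.of_forall fun t => (HH_cont k l m hf t).aestronglyMeasurable
  · exact (HH_cont k l m hf' t).aestronglyMeasurable
  · filter_upwards [adm_ae3 hρ] with p hp s hs
    exact hC _ _ _ _ hp hs.1.le hs.2.le
  · exact Eventually.of_forall fun p s hs => (HH_hd k l m hf.1 s p.1 p.2.1 p.2.2).2.2.2

lemma GG_congr_half (k l : ℝ) {m : ℂ} {f g : ℝ → ℝ → ℝ → ℝ → ℝ} {t : ℝ}
    (h : ∀ x y z, 0 < z → f x y z t = g x y z t) :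
    GG (volume.restrict (Ici 0)) k l m f t = GG (volume.restrict (Ici 0)) k l m g t := by
  unfold GG
  rw [← Measure.restrict_congr_set (Ioi_ae_eq_Ici (a := (0 : ℝ)) (μ := volume))]
  apply integral_congr_ae
  have h1 : ∀ᵐ z ∂(volume.restrict (Ioi (0 : ℝ))), 0 < z := ae_restrict_mem measurableSet_Ioi
  have h2 : ∀ᵐ q : ℝ × ℝ ∂(volume.prod (volume.restrict (Ioi (0 : ℝ)))), 0 < q.2 :=
    Measure.quasiMeasurePreserving_snd.ae h1
  have h3 : ∀ᵐ p : ℝ × ℝ × ℝ ∂(volume.prod (volume.prod (volume.restrict (Ioi (0 : ℝ))))),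
      0 < p.2.2 := Measure.quasiMeasurePreserving_snd.ae h2
  filter_upwards [h3] with p hp
  simp only [HH, h _ _ _ hp]

/-- under the Lamé–Navier equations, decay, and the stress boundary conditions,
the combination `R = kŵ − mû` of the half-space Fourier transforms satisfies the ODE
`∂²ₜR + μ(k²+l²+m²)R = F_R` for all `k, l ∈ ℝ`, `Im m ≤ 0`, `t > 0`. -/
theorem global_ODE_R (lam mu : ℝ) (hmu : 0 < mu) (hl : 0 < lam + 2 * mu)
    (u v w : ℝ → ℝ → ℝ → ℝ → ℝ) (g₁ g₂ g₃ : ℝ → ℝ → ℝ → ℝ)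
    (hsu : Smooth4 u) (hsv : Smooth4 v) (hsw : Smooth4 w)
    (hpde : LameNavier lam mu u v w)
    (hdu : DecaysAll u) (hdv : DecaysAll v) (hdw : DecaysAll w)
    (hg₁ : Continuous fun p : ℝ × ℝ × ℝ => g₁ p.1 p.2.1 p.2.2)
    (hg₂ : Continuous fun p : ℝ × ℝ × ℝ => g₂ p.1 p.2.1 p.2.2)
    (hg₃ : Continuous fun p : ℝ × ℝ × ℝ => g₃ p.1 p.2.1 p.2.2)
    (hbc : StressBC lam mu u v w g₁ g₂ g₃) :
    ∀ (k l : ℝ) (m : ℂ), m.im ≤ 0 → ∀ t : ℝ, 0 < t →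
      deriv (deriv (fun τ : ℝ => (k : ℂ) * FT3 w k l m τ - m * FT3 u k l m τ)) t
        + (mu : ℂ) * ((k : ℂ) ^ 2 + (l : ℂ) ^ 2 + m ^ 2) *
            ((k : ℂ) * FT3 w k l m t - m * FT3 u k l m t)
        = FR lam mu u v w g₁ g₂ g₃ k l m t := by
  intro k l m hm t ht
  have su : SD u := ⟨hsu, hdu.1⟩
  have sv : SD v := ⟨hsv, hdv.1⟩
  have sw : SD w := ⟨hsw, hdw.1⟩
  have su1 : ∀ i, SD (pd i u) := fun i => ⟨sm_pd hsu i, hdu.2.1 i⟩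
  have sv1 : ∀ i, SD (pd i v) := fun i => ⟨sm_pd hsv i, hdv.2.1 i⟩
  have sw1 : ∀ i, SD (pd i w) := fun i => ⟨sm_pd hsw i, hdw.2.1 i⟩
  have su2 : ∀ i j, SD (pd i (pd j u)) := fun i j => ⟨sm_pd (sm_pd hsu j) i, hdu.2.2 i j⟩
  have sv2 : ∀ i j, SD (pd i (pd j v)) := fun i j => ⟨sm_pd (sm_pd hsv j) i, hdv.2.2 i j⟩
  have sw2 : ∀ i j, SD (pd i (pd j w)) := fun i j => ⟨sm_pd (sm_pd hsw j) i, hdw.2.2 i j⟩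
  have ht0 := ht.le
  have hA := adm_half
  have hB := adm_dirac
  -- time derivatives
  have d1 : ∀ τ : ℝ, 0 < τ →
      HasDerivAt (fun τ : ℝ => (k : ℂ) * FT3 w k l m τ - m * FT3 u k l m τ)
      ((k : ℂ) * GG (volume.restrict (Ici 0)) k l m (pd 3 w) τ
        - m * GG (volume.restrict (Ici 0)) k l m (pd 3 u) τ) τ := by
    intro τ hτ
    refine (((GG_pd3 hA k l hm sw (sw1 3) hτ).const_mul (k : ℂ)).sub
      ((GG_pd3 hA k l hm su (su1 3) hτ).const_mul m)).congr_of_eventuallyEq ?_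
    filter_upwards [Ioi_mem_nhds hτ] with s hs
    simp only [FT3_eq k l hm sw (le_of_lt hs), FT3_eq k l hm su (le_of_lt hs), Pi.sub_apply]
  have d2 : HasDerivAt (deriv (fun τ : ℝ => (k : ℂ) * FT3 w k l m τ - m * FT3 u k l m τ))
      ((k : ℂ) * GG (volume.restrict (Ici 0)) k l m (pd 3 (pd 3 w)) t
        - m * GG (volume.restrict (Ici 0)) k l m (pd 3 (pd 3 u)) t) t := by
    refine (((GG_pd3 hA k l hm (sw1 3) (sw2 3 3) ht).const_mul (k : ℂ)).sub
      ((GG_pd3 hA k l hm (su1 3) (su2 3 3) ht).const_mul m)).congr_of_eventuallyEq ?_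
    filter_upwards [Ioi_mem_nhds ht] with s hs
    exact (d1 s hs).deriv
  rw [d2.deriv]
  -- transformed equations
  have eu : GG (volume.restrict (Ici 0)) k l m (pd 3 (pd 3 u)) t =
      (lam + 2 * mu : ℝ) * GG (volume.restrict (Ici 0)) k l m (pd 0 (pd 0 u)) t
      + (lam + mu : ℝ) * (GG (volume.restrict (Ici 0)) k l m (pd 0 (pd 1 v)) t
        + GG (volume.restrict (Ici 0)) k l m (pd 0 (pd 2 w)) t)
      + mu * (GG (volume.restrict (Ici 0)) k l m (pd 1 (pd 1 u)) t
        + GG (volume.restrict (Ici 0)) k l m (pd 2 (pd 2 u)) t) := by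
    have a1 := (su2 0 0).smul (lam + 2 * mu)
    have a2 := ((sv2 0 1).add (sw2 0 2)).smul (lam + mu)
    have a3 := ((su2 1 1).add (su2 2 2)).smul mu
    rw [← GG_add hA k l hm (sv2 0 1) (sw2 0 2) ht0, ← GG_add hA k l hm (su2 1 1) (su2 2 2) ht0,
      ← GG_smul, ← GG_smul, ← GG_smul, ← GG_add hA k l hm a1 a2 ht0,
      ← GG_add hA k l hm (a1.add a2) a3 ht0]
    exact GG_congr_half k l fun x y z hz => (hpde x y z t hz ht).1.symm
  have ew : GG (volume.restrict (Ici 0)) k l m (pd 3 (pd 3 w)) t =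
      (lam + 2 * mu : ℝ) * GG (volume.restrict (Ici 0)) k l m (pd 2 (pd 2 w)) t
      + (lam + mu : ℝ) * (GG (volume.restrict (Ici 0)) k l m (pd 2 (pd 0 u)) t
        + GG (volume.restrict (Ici 0)) k l m (pd 2 (pd 1 v)) t)
      + mu * (GG (volume.restrict (Ici 0)) k l m (pd 0 (pd 0 w)) t
        + GG (volume.restrict (Ici 0)) k l m (pd 1 (pd 1 w)) t) := by
    have a1 := (sw2 2 2).smul (lam + 2 * mu)
    have a2 := ((su2 2 0).add (sv2 2 1)).smul (lam + mu)
    have a3 := ((sw2 0 0).add (sw2 1 1)).smul mu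
    rw [← GG_add hA k l hm (su2 2 0) (sv2 2 1) ht0, ← GG_add hA k l hm (sw2 0 0) (sw2 1 1) ht0,
      ← GG_smul, ← GG_smul, ← GG_smul, ← GG_add hA k l hm a1 a2 ht0,
      ← GG_add hA k l hm (a1.add a2) a3 ht0]
    exact GG_congr_half k l fun x y z hz => (hpde x y z t hz ht).2.2.symm
  -- boundary data
  have b1 : FT2 g₁ k l t = GG (Measure.dirac 0) k l m (pd 2 u) t
      + Complex.I * k * GG (Measure.dirac 0) k l m w t := by
    rw [← GG_pd0 hB k l hm sw (sw1 0) ht0, ← GG_add hB k l hm (su1 2) (sw1 0) ht0,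
      ← FT2_eq k l hm ((su1 2).add (sw1 0)) ht0]
    simp only [FT2, ← (hbc _ _ t ht).1]
  have b3 : FT2 g₃ k l t = GG (Measure.dirac 0) k l m (pd 2 w) t
      + (lam / (lam + 2 * mu) : ℝ) * (Complex.I * k * GG (Measure.dirac 0) k l m u t
        + Complex.I * l * GG (Measure.dirac 0) k l m v t) := by
    have a := ((su1 0).add (sv1 1)).smul (lam / (lam + 2 * mu))
    rw [← GG_pd0 hB k l hm su (su1 0) ht0, ← GG_pd1 hB k l hm sv (sv1 1) ht0,
      ← GG_add hB k l hm (su1 0) (sv1 1) ht0, ← GG_smul, ← GG_add hB k l hm (sw1 2) a ht0,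
      ← FT2_eq k l hm ((sw1 2).add a) ht0]
    simp only [FT2, ← (hbc _ _ t ht).2.2]
  have hlc : (lam : ℂ) + 2 * mu ≠ 0 := by exact_mod_cast hl.ne'
  unfold FR
  rw [b1, b3, FT2_eq k l hm su ht0, FT2_eq k l hm sv ht0, FT2_eq k l hm sw ht0,
    FT3_eq k l hm sw ht0, FT3_eq k l hm su ht0, eu, ew,
    GG_pd0 hA k l hm (su1 0) (su2 0 0) ht0, GG_pd0 hA k l hm (sv1 1) (sv2 0 1) ht0,
    GG_pd0 hA k l hm (sw1 2) (sw2 0 2) ht0, GG_pd1 hA k l hm (su1 1) (su2 1 1) ht0,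
    GG_pd2 k l hm (su1 2) (su2 2 2) ht0, GG_pd2 k l hm (sw1 2) (sw2 2 2) ht0,
    GG_pd2 k l hm (su1 0) (su2 2 0) ht0, GG_pd2 k l hm (sv1 1) (sv2 2 1) ht0,
    GG_pd0 hA k l hm (sw1 0) (sw2 0 0) ht0, GG_pd1 hA k l hm (sw1 1) (sw2 1 1) ht0,
    GG_pd0 hA k l hm su (su1 0) ht0, GG_pd0 hA k l hm sw (sw1 0) ht0,
    GG_pd1 hA k l hm su (su1 1) ht0, GG_pd1 hA k l hm sv (sv1 1) ht0,
    GG_pd1 hA k l hm sw (sw1 1) ht0,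
    GG_pd0 hB k l hm su (su1 0) ht0, GG_pd1 hB k l hm sv (sv1 1) ht0,
    GG_pd2 k l hm su (su1 2) ht0, GG_pd2 k l hm sw (sw1 2) ht0]
  generalize GG (volume.restrict (Ici 0)) k l m u t = U
  generalize GG (volume.restrict (Ici 0)) k l m v t = V
  generalize GG (volume.restrict (Ici 0)) k l m w t = W
  generalize GG (Measure.dirac 0) k l m u t = U0
  generalize GG (Measure.dirac 0) k l m v t = V0
  generalize GG (Measure.dirac 0) k l m w t = W0
  generalize GG (Measure.dirac 0) k l m (pd 2 u) t = Uz
  generalize GG (Measure.dirac 0) k l m (pd 2 w) t = Wz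
  push_cast
  field_simp
  ring_nf
  simp only [Complex.I_sq]
  ring
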